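/- arXiv:2201.09598 — 3 statements merged into one kernel-verified Lean document; each statement's English description precedes it below -/
import Mathlib

section
/- Let P, X ∈ ℝ^{2n×2n} be symmetric positive definite, partitioned into n×n blocks P = [[P11, P12],[P12^T, P22]] and X = [[X11, X12],[X12^T, X22]]. For invertible T ∈ ℝ^{n×n} set T̄ = [[I_n, 0],[0, T]] and f(T) = Tr(P T̄^{-1} X T̄^{-T}). Then the infimum of f over all invertible T ∈ ℝ^{n×n} equals Tr(P11 X11) − Tr(P22^{-1} P12^T X12 X22^{-1} X12^T P12), and this infimum is attained by some invertible T if and only if P12^T X12 is invertible. In particular, if X12 is singular, then no invertible T attains the infimum of f. -/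
/-!
Put `S = T⁻¹`, `A = P₂₂`, `B = X₂₂` and `M = P₁₂ᵀ X₁₂`. Then `f T` is the quadratic function
`tr (P₁₁ X₁₁) + 2 tr (M Sᵀ) + tr (A S B Sᵀ)` of `S`. Completing the square at its critical point
`S₀ = -A⁻¹ M B⁻¹` gives `f T = c + tr (A (S - S₀) B (S - S₀)ᵀ)`
(`cost_eq`, `complete_square`). Factoring `A = UᵀU` and `B = VᵀV` with `U`, `V` invertible, the
last trace is the squared Frobenius norm of `U (S - S₀) Vᵀ`; so it is nonnegative and vanishes
only at `S = S₀` (`trace_quad_nonneg`, `trace_quad_eq_zero`). Hence `c` is a lower bound, attained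
by an invertible `S` exactly when `S₀` is invertible, that is, when `M` is. It is the greatest
lower bound because `S₀ + t • 1` is invertible for all small `t ≠ 0`
(`eventually_isUnit_det_add_smul_one`), and there the cost is `c + t² tr (A B)`.
-/

open Matrix

open scoped MatrixOrder ComplexOrder in
lemma posDef_factor {n : ℕ} {A : Matrix (Fin n) (Fin n) ℝ} (hA : A.PosDef) :
    ∃ U : Matrix (Fin n) (Fin n) ℝ, IsUnit U ∧ A = Uᵀ * U := by
  obtain ⟨y, hy, h⟩ := CStarAlgebra.isStrictlyPositive_iff_eq_star_mul_self.mp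
    hA.isStrictlyPositive
  exact ⟨y, hy, by rw [h, star_eq_conjTranspose, conjTranspose_eq_transpose_of_trivial]⟩

/-- The trace form `tr (A D B Dᵀ)`, for `A = UᵀU` and `B = VᵀV`, as a squared Frobenius norm. -/
lemma trace_quad_factor {n : ℕ} (U V D : Matrix (Fin n) (Fin n) ℝ) :
    (Uᵀ * U * D * (Vᵀ * V) * Dᵀ).trace = ((U * D * Vᵀ) * (U * D * Vᵀ)ᴴ).trace := by
  have h : Uᵀ * U * D * (Vᵀ * V) * Dᵀ = Uᵀ * (U * D * Vᵀ * V * Dᵀ) := by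
    simp only [Matrix.mul_assoc]
  rw [h, Matrix.trace_mul_comm]
  simp only [conjTranspose_eq_transpose_of_trivial, transpose_mul, transpose_transpose,
    Matrix.mul_assoc]

lemma trace_quad_nonneg {n : ℕ} {A B : Matrix (Fin n) (Fin n) ℝ} (hA : A.PosDef) (hB : B.PosDef)
    (D : Matrix (Fin n) (Fin n) ℝ) : 0 ≤ (A * D * B * Dᵀ).trace := by
  obtain ⟨U, -, rfl⟩ := posDef_factor hA
  obtain ⟨V, -, rfl⟩ := posDef_factor hB
  rw [trace_quad_factor]
  exact (posSemidef_self_mul_conjTranspose _).trace_nonneg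

lemma trace_quad_eq_zero {n : ℕ} {A B : Matrix (Fin n) (Fin n) ℝ} (hA : A.PosDef) (hB : B.PosDef)
    {D : Matrix (Fin n) (Fin n) ℝ} (h : (A * D * B * Dᵀ).trace = 0) : D = 0 := by
  obtain ⟨U, hU, rfl⟩ := posDef_factor hA
  obtain ⟨V, hV, rfl⟩ := posDef_factor hB
  rw [trace_quad_factor, trace_mul_conjTranspose_self_eq_zero_iff] at h
  have hV' : IsUnit Vᵀ := (isUnit_transpose V).mpr hV
  rwa [hV'.mul_left_eq_zero, hU.mul_right_eq_zero] at h

lemma inv_fromBlocks_one {n : ℕ} {T : Matrix (Fin n) (Fin n) ℝ} (hT : IsUnit T.det) :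
    (fromBlocks 1 0 0 T : Matrix (Fin n ⊕ Fin n) (Fin n ⊕ Fin n) ℝ)⁻¹ = fromBlocks 1 0 0 T⁻¹ := by
  apply inv_eq_right_inv
  simp [fromBlocks_multiply, mul_nonsing_inv _ hT]

/-- The cost as a quadratic function of `S`, the inverse of the transformation. The symmetry
of `P` and `X` is encoded by taking the lower-left block to be the transpose of the upper-right
one. -/
lemma cost_eq {n : ℕ} (P₁₁ P₁₂ P₂₂ X₁₁ X₁₂ X₂₂ S : Matrix (Fin n) (Fin n) ℝ) :
    (fromBlocks P₁₁ P₁₂ P₁₂ᵀ P₂₂ * fromBlocks 1 0 0 S * fromBlocks X₁₁ X₁₂ X₁₂ᵀ X₂₂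
      * (fromBlocks 1 0 0 S)ᵀ).trace
    = (P₁₁ * X₁₁).trace + 2 * (P₁₂ᵀ * X₁₂ * Sᵀ).trace + (P₂₂ * S * X₂₂ * Sᵀ).trace := by
  have h : (P₁₂ * S * X₁₂ᵀ).trace = (P₁₂ᵀ * X₁₂ * Sᵀ).trace := by
    rw [← trace_transpose, transpose_mul, transpose_mul, transpose_transpose, ← Matrix.mul_assoc,
      Matrix.trace_mul_comm, ← Matrix.mul_assoc]
  have htr : ∀ A B C D : Matrix (Fin n) (Fin n) ℝ,
      (fromBlocks A B C D).trace = A.trace + D.trace := fun A B C D => by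
    simp [trace, Fintype.sum_sum_type]
  simp only [fromBlocks_multiply, fromBlocks_transpose, htr, Matrix.mul_one,
    Matrix.mul_zero, add_zero, zero_add, transpose_one, transpose_zero, Matrix.add_mul,
    trace_add, h]
  ring

lemma complete_square {n : ℕ} {A B : Matrix (Fin n) (Fin n) ℝ} (hA : A.PosDef) (hB : B.PosDef)
    (M S : Matrix (Fin n) (Fin n) ℝ) :
    2 * (M * Sᵀ).trace + (A * S * B * Sᵀ).trace
      = -(A⁻¹ * M * B⁻¹ * Mᵀ).trace
        + (A * (S - -(A⁻¹ * M * B⁻¹)) * B * (S - -(A⁻¹ * M * B⁻¹))ᵀ).trace := by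
  have hAd : IsUnit A.det := (isUnit_iff_isUnit_det A).mp hA.isUnit
  have hBd : IsUnit B.det := (isUnit_iff_isUnit_det B).mp hB.isUnit
  have hAt : Aᵀ = A := hA.1
  have hBt : Bᵀ = B := hB.1
  set R := A⁻¹ * M * B⁻¹ with hR
  have hARB : A * R * B = M := by
    rw [hR, Matrix.mul_assoc A⁻¹, mul_nonsing_inv_cancel_left _ _ hAd,
      nonsing_inv_mul_cancel_right _ _ hBd]
  have hcross : (A * S * B * Rᵀ).trace = (M * Sᵀ).trace := by
    rw [← hARB, ← trace_transpose]
    simp only [transpose_mul, transpose_transpose, hAt, hBt]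
    rw [← Matrix.mul_assoc, ← Matrix.mul_assoc, Matrix.trace_mul_comm]
    simp only [Matrix.mul_assoc]
  have hRM : (R * Mᵀ).trace = (M * Rᵀ).trace := by
    rw [← trace_transpose, transpose_mul, transpose_transpose]
  have hexp : A * (S - -R) * B * (S - -R)ᵀ
      = A * S * B * Sᵀ + A * S * B * Rᵀ + (A * R * B * Sᵀ + A * R * B * Rᵀ) := by
    rw [sub_neg_eq_add, transpose_add]
    simp only [Matrix.mul_add, Matrix.add_mul]
    abel
  rw [hexp, hARB]
  simp only [trace_add, hcross, hRM]
  ring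

/-- The determinant of `S + t • 1` is the characteristic polynomial of `-S` evaluated at `t`,
so it vanishes for finitely many `t` only. -/
lemma eventually_isUnit_det_add_smul_one {n : ℕ} (S : Matrix (Fin n) (Fin n) ℝ) :
    ∀ᶠ t : ℝ in nhdsWithin 0 {0}ᶜ, IsUnit (S + t • (1 : Matrix (Fin n) (Fin n) ℝ)).det := by
  apply nhdsNE_le_cofinite
  have hfin := Polynomial.finite_setOfPred_isRoot (charpoly_monic (-S)).ne_zero
  filter_upwards [hfin.compl_mem_cofinite] with t ht
  rw [isUnit_iff_ne_zero]
  intro h0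
  apply ht
  change Polynomial.eval t (-S).charpoly = 0
  rw [eval_charpoly, ← h0, sub_neg_eq_add, add_comm, scalar_apply, smul_one_eq_diagonal]

theorem similarity_transformation_infimum {n : ℕ}
    (P X : Matrix (Fin n ⊕ Fin n) (Fin n ⊕ Fin n) ℝ)
    (hP : P.PosDef) (hX : X.PosDef)
    (f : Matrix (Fin n) (Fin n) ℝ → ℝ)
    (hf : ∀ T : Matrix (Fin n) (Fin n) ℝ,
        f T = (P * (fromBlocks 1 0 0 T)⁻¹ * X * ((fromBlocks 1 0 0 T)⁻¹)ᵀ).trace)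
    (c : ℝ)
    (hc : c = (P.toBlocks₁₁ * X.toBlocks₁₁).trace
        - (P.toBlocks₂₂⁻¹ * P.toBlocks₁₂ᵀ * X.toBlocks₁₂ * X.toBlocks₂₂⁻¹
            * X.toBlocks₁₂ᵀ * P.toBlocks₁₂).trace) :
    IsGLB {y : ℝ | ∃ T : Matrix (Fin n) (Fin n) ℝ, IsUnit T.det ∧ f T = y} c
    ∧ ((∃ T : Matrix (Fin n) (Fin n) ℝ, IsUnit T.det ∧ f T = c)
        ↔ IsUnit (P.toBlocks₁₂ᵀ * X.toBlocks₁₂).det)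
    ∧ (¬ IsUnit X.toBlocks₁₂.det →
        ∀ T : Matrix (Fin n) (Fin n) ℝ, IsUnit T.det → f T ≠ c) := by
  have hA : P.toBlocks₂₂.PosDef := hP.submatrix Sum.inr_injective
  have hB : X.toBlocks₂₂.PosDef := hX.submatrix Sum.inr_injective
  have hPb : P = fromBlocks P.toBlocks₁₁ P.toBlocks₁₂ P.toBlocks₁₂ᵀ P.toBlocks₂₂ := by
    have h : P.toBlocks₂₁ = P.toBlocks₁₂ᵀ := by
      ext i j
      exact (hP.1.apply (Sum.inr i) (Sum.inl j)).symm
    rw [← h, fromBlocks_toBlocks]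
  have hXb : X = fromBlocks X.toBlocks₁₁ X.toBlocks₁₂ X.toBlocks₁₂ᵀ X.toBlocks₂₂ := by
    have h : X.toBlocks₂₁ = X.toBlocks₁₂ᵀ := by
      ext i j
      exact (hX.1.apply (Sum.inr i) (Sum.inl j)).symm
    rw [← h, fromBlocks_toBlocks]
  set A := P.toBlocks₂₂
  set B := X.toBlocks₂₂
  set M := P.toBlocks₁₂ᵀ * X.toBlocks₁₂ with hM
  set S₀ := -(A⁻¹ * M * B⁻¹) with hS₀
  have key : ∀ T : Matrix (Fin n) (Fin n) ℝ, IsUnit T.det →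
      f T = c + (A * (T⁻¹ - S₀) * B * (T⁻¹ - S₀)ᵀ).trace := by
    intro T hT
    have hM' : A⁻¹ * M * B⁻¹ * Mᵀ
        = A⁻¹ * P.toBlocks₁₂ᵀ * X.toBlocks₁₂ * B⁻¹ * X.toBlocks₁₂ᵀ * P.toBlocks₁₂ := by
      simp only [hM, transpose_mul, transpose_transpose, Matrix.mul_assoc]
    have hsq := complete_square hA hB M T⁻¹
    rw [hM'] at hsq
    have hcost : f T = (P.toBlocks₁₁ * X.toBlocks₁₁).trace + 2 * (M * T⁻¹ᵀ).trace
        + (A * T⁻¹ * B * T⁻¹ᵀ).trace := by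
      rw [hf, inv_fromBlocks_one hT, ← cost_eq, ← hPb, ← hXb]
    rw [hcost, hc]
    linarith
  have hS₀unit : IsUnit S₀.det ↔ IsUnit M.det := by
    have hAi : IsUnit A⁻¹.det := (isUnit_iff_isUnit_det _).mp hA.inv.isUnit
    have hBi : IsUnit B⁻¹.det := (isUnit_iff_isUnit_det _).mp hB.inv.isUnit
    rw [← isUnit_iff_isUnit_det, hS₀, IsUnit.neg_iff, isUnit_iff_isUnit_det, det_mul, det_mul,
      IsUnit.mul_iff, IsUnit.mul_iff]
    tauto
  have hatt : (∃ T : Matrix (Fin n) (Fin n) ℝ, IsUnit T.det ∧ f T = c) ↔ IsUnit M.det := by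
    rw [← hS₀unit]
    constructor
    · rintro ⟨T, hT, hTc⟩
      have h0 := trace_quad_eq_zero hA hB (by linarith [key T hT] :
        (A * (T⁻¹ - S₀) * B * (T⁻¹ - S₀)ᵀ).trace = 0)
      rw [← sub_eq_zero.mp h0]
      exact isUnit_nonsing_inv_det T hT
    · intro h
      have hT := isUnit_nonsing_inv_det S₀ h
      refine ⟨S₀⁻¹, hT, ?_⟩
      rw [key _ hT, nonsing_inv_nonsing_inv _ h]
      simp
  refine ⟨⟨?_, ?_⟩, hatt, ?_⟩
  · rintro y ⟨T, hT, rfl⟩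
    rw [key T hT]
    linarith [trace_quad_nonneg hA hB (T⁻¹ - S₀)]
  · intro b hb
    have hlim : Filter.Tendsto (fun t : ℝ => c + t ^ 2 * (A * B).trace)
        (nhdsWithin 0 {0}ᶜ) (nhds c) := by
      have hcont : Continuous (fun t : ℝ => c + t ^ 2 * (A * B).trace) := by fun_prop
      have h := hcont.tendsto 0
      simp only [ne_eq, OfNat.ofNat_ne_zero, not_false_eq_true, zero_pow, zero_mul, add_zero] at h
      exact h.mono_left nhdsWithin_le_nhds
    refine ge_of_tendsto hlim ?_
    filter_upwards [eventually_isUnit_det_add_smul_one S₀] with t ht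
    have hT := isUnit_nonsing_inv_det _ ht
    refine hb ⟨_, hT, ?_⟩
    rw [key _ hT, nonsing_inv_nonsing_inv _ ht, add_sub_cancel_left]
    simp only [transpose_smul, transpose_one, Matrix.mul_smul, Matrix.smul_mul, Matrix.mul_one,
      smul_smul, trace_smul, smul_eq_mul]
    ring
  · intro hX₁₂ T hT hTc
    have h := hatt.mp ⟨T, hT, hTc⟩
    rw [hM, det_mul, IsUnit.mul_iff] at h
    exact hX₁₂ h.2
end

section
/- Let A ∈ ℝ^{n×n} and C ∈ ℝ^{d×n} with C of full row rank d, and let Δ ∈ ℝ^{n×n} be symmetric positive definite. Let Σ̂ ∈ ℝ^{n×n} be symmetric positive definite satisfying the Riccati equation Σ̂ = Δ + A Σ̂ A^T − A Σ̂ C^T (C Σ̂ C^T)^{-1} C Σ̂ A^T, and set L* = A Σ̂ C^T (C Σ̂ C^T)^{-1}. Then for every L ∈ ℝ^{n×d} such that A − LC is Schur stable and every symmetric Σ_L ∈ ℝ^{n×n} satisfying the Lyapunov equation Σ_L = Δ + (A − LC) Σ_L (A − LC)^T, one has Tr(Σ_L) ≥ Tr(Σ̂), with equality if and only if L = L*.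 In other words, L* is the unique minimizer of Tr(Σ_L) over all stabilizing observer gains L. -/
/-!
For a gain `L` put `F = A - L C`, `S = C Sh Cᵀ` and `Q = (L - Lstar) S (L - Lstar)ᵀ`. Completing the
square in the Riccati equation gives `Sh = Δ + F Sh Fᵀ - Q` (`riccati_complete_square`), so the gap
`D = SL - Sh` solves the Lyapunov equation `D = Q + F D Fᵀ`. Iterating this equation,
`D - F ^ N D (F ^ N)ᵀ` is a sum of conjugates of `Q`, hence positive semidefinite; since `F` is
Schur stable, Gelfand's formula gives `F ^ N → 0` (`SchurStable.tendsto_pow`), and therefore `D` is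
positive semidefinite (`lyapunov_posSemidef`). Then `D - Q = F D Fᵀ` is positive semidefinite too,
so `tr D ≥ tr Q ≥ 0`.

If `tr D = 0` then `tr Q = 0`, so `Q = 0`, and `L = Lstar` because `S` is positive definite, `C`
having full row rank. If `L = Lstar` then `Q = 0`, so `D` and `-D` both solve the homogeneous
equation, are both positive semidefinite, and have nonnegative traces.
-/

open Matrix

/-- A real square matrix is Schur stable if all of its (complex) eigenvalues lie
strictly inside the unit circle. -/
def SchurStable {k : Type*} [Fintype k] (M : Matrix k k ℝ) : Prop :=
  ∀ (μ : ℂ) (v : k → ℂ), v ≠ 0 → M.map (fun x => (x : ℂ)) *ᵥ v = μ • v → ‖μ‖ < 1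

open Filter Topology in
/-- In a complex Banach algebra, the powers of an element of spectral radius less than one tend to
zero, by Gelfand's formula. -/
lemma tendsto_pow_of_spectralRadius_lt_one {B : Type*} [NormedRing B] [NormedAlgebra ℂ B]
    [CompleteSpace B] (a : B) (h : spectralRadius ℂ a < 1) :
    Tendsto (fun N : ℕ => a ^ N) atTop (𝓝 0) := by
  obtain ⟨s, hs, hs1⟩ := ENNReal.lt_iff_exists_nnreal_btwn.1 h
  have hs1 : s < 1 := by exact_mod_cast hs1
  have hev := (spectrum.pow_nnnorm_pow_one_div_tendsto_nhds_spectralRadius a).eventually_lt_const hs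
  apply squeeze_zero_norm' (a := fun N : ℕ => (s : ℝ) ^ N)
  · filter_upwards [hev, eventually_gt_atTop 0] with N hN hN0
    have hN' : (0 : ℝ) < N := by exact_mod_cast hN0
    have h2 := ENNReal.rpow_le_rpow hN.le hN'.le
    rw [← ENNReal.rpow_mul, one_div, inv_mul_cancel₀ hN'.ne', ENNReal.rpow_one,
      ENNReal.rpow_natCast] at h2
    exact_mod_cast h2
  · exact tendsto_pow_atTop_nhds_zero_of_lt_one s.2 (by exact_mod_cast hs1)

section

-- The powers live in a finite-dimensional space, so the choice of norm does not affect the limit;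
-- the operator norm below makes complex matrices a Banach algebra.
attribute [local instance] Matrix.linftyOpNormedRing Matrix.linftyOpNormedAlgebra

open Filter Topology in
lemma SchurStable.tendsto_pow {n : ℕ} {F : Matrix (Fin n) (Fin n) ℝ} (hF : SchurStable F) :
    Tendsto (fun N : ℕ => F ^ N) atTop (𝓝 0) := by
  rcases isEmpty_or_nonempty (Fin n) with hn | hn
  · exact tendsto_const_nhds.congr fun N => Subsingleton.elim _ _
  let G : Matrix (Fin n) (Fin n) ℂ := F.map (fun x => (x : ℂ))
  have hG : spectralRadius ℂ G < 1 := by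
    refine spectrum.spectralRadius_lt_of_forall_lt (r := 1) G fun z hz => ?_
    rw [spectrum.mem_iff, Matrix.isUnit_iff_isUnit_det, isUnit_iff_ne_zero, not_not] at hz
    obtain ⟨v, hv, hzv⟩ := Matrix.exists_mulVec_eq_zero_iff.2 hz
    rw [Matrix.sub_mulVec, Matrix.algebraMap_eq_diagonal, sub_eq_zero] at hzv
    refine hF z v hv ?_
    rw [← show _ = F.map (fun x => (x : ℂ)) *ᵥ v from hzv]
    ext i
    simp [Matrix.mulVec_diagonal]
  have hlim := tendsto_pow_of_spectralRadius_lt_one G hG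
  have hre : Continuous fun M : Matrix (Fin n) (Fin n) ℂ => M.map Complex.re :=
    continuous_id.matrix_map Complex.continuous_re
  have h3 := (hre.tendsto 0).comp hlim
  convert! h3 using 2 with N
  · have : G ^ N = (F ^ N).map (fun x => (x : ℂ)) :=
      (map_pow (Complex.ofRealHom.mapMatrix (m := Fin n)) F N).symm
    ext i j
    simp [this]

end

open Filter Topology in
/-- A symmetric solution of a Lyapunov equation with Schur stable `F` and positive semidefinite
forcing `Q` is positive semidefinite. -/
lemma lyapunov_posSemidef {n : ℕ} {F D Q : Matrix (Fin n) (Fin n) ℝ} (hF : SchurStable F)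
    (hQ : Q.PosSemidef) (hD : Dᵀ = D) (h : D = Q + F * D * Fᵀ) : D.PosSemidef := by
  have hiter : ∀ N : ℕ, (D - F ^ N * D * (F ^ N)ᵀ).PosSemidef := by
    intro N
    induction N with
    | zero => simpa using PosSemidef.zero
    | succ N ih =>
      have e : D - F ^ (N + 1) * D * (F ^ (N + 1))ᵀ
          = Q + F * (D - F ^ N * D * (F ^ N)ᵀ) * Fᴴ := by
        rw [pow_succ' F N, transpose_mul, conjTranspose_eq_transpose_of_trivial]
        nth_rewrite 1 [h]
        noncomm_ring
      rw [e]
      exact hQ.add (ih.mul_mul_conjTranspose_same F)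
  refine PosSemidef.of_dotProduct_mulVec_nonneg
    (by rw [IsHermitian, conjTranspose_eq_transpose_of_trivial, hD]) fun x => ?_
  have hc : Continuous fun P : Matrix (Fin n) (Fin n) ℝ =>
      star x ⬝ᵥ ((D - P * D * Pᵀ) *ᵥ x) := by fun_prop
  have hlim := (hc.tendsto 0).comp hF.tendsto_pow
  simp only [Matrix.zero_mul, sub_zero] at hlim
  exact ge_of_tendsto' hlim fun N => (hiter N).dotProduct_mulVec_nonneg x

/-- Completing the square: for an arbitrary gain `L`, the Riccati equation is a Lyapunov equation
for `A - L * C` with a forcing lowered by a quadratic term in `L - K`. -/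
lemma riccati_complete_square {n d : ℕ} {A Sh : Matrix (Fin n) (Fin n) ℝ}
    {C : Matrix (Fin d) (Fin n) ℝ} (Δ : Matrix (Fin n) (Fin n) ℝ) (hSh : Shᵀ = Sh)
    (hS : IsUnit (C * Sh * Cᵀ))
    (hRic : Sh = Δ + A * Sh * Aᵀ - A * Sh * Cᵀ * (C * Sh * Cᵀ)⁻¹ * (C * Sh * Aᵀ))
    {K : Matrix (Fin n) (Fin d) ℝ} (hK : K = A * Sh * Cᵀ * (C * Sh * Cᵀ)⁻¹)
    (L : Matrix (Fin n) (Fin d) ℝ) :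
    Sh = Δ + (A - L * C) * Sh * (A - L * C)ᵀ - (L - K) * (C * Sh * Cᵀ) * (L - K)ᵀ := by
  have hdet := (Matrix.isUnit_iff_isUnit_det _).1 hS
  have hKS : K * (C * Sh * Cᵀ) = A * Sh * Cᵀ := by
    rw [hK, Matrix.mul_assoc, Matrix.nonsing_inv_mul _ hdet, Matrix.mul_one]
  have hSK : (C * Sh * Cᵀ) * Kᵀ = C * Sh * Aᵀ := by
    have := congrArg transpose hKS
    simpa [transpose_mul, hSh, Matrix.mul_assoc] using this
  have e1 : (L - K) * (C * Sh * Cᵀ) * (L - K)ᵀ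
      = L * (C * Sh * Cᵀ) * Lᵀ - L * (C * Sh * Aᵀ) - A * Sh * Cᵀ * Lᵀ + K * (C * Sh * Aᵀ) := by
    rw [transpose_sub, Matrix.sub_mul, hKS, Matrix.sub_mul, Matrix.mul_sub, Matrix.mul_sub,
      Matrix.mul_assoc L _ Kᵀ, hSK, ← hKS, Matrix.mul_assoc K _ Kᵀ, hSK]
    abel
  rw [e1]
  nth_rewrite 1 [hRic]
  rw [← hK, transpose_sub, transpose_mul]
  simp only [Matrix.mul_sub, Matrix.sub_mul, Matrix.mul_assoc]
  abel

lemma vecMul_injective_of_rank {n d : ℕ} {C : Matrix (Fin d) (Fin n) ℝ} (hC : C.rank = d) :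
    Function.Injective C.vecMul := by
  rw [Matrix.vecMul_injective_iff, linearIndependent_iff_card_eq_finrank_span]
  rw [Matrix.rank_eq_finrank_span_row] at hC
  simpa [Set.finrank] using hC.symm

lemma eq_zero_of_mul_posDef_mul_transpose_eq_zero {n d : ℕ} {S : Matrix (Fin d) (Fin d) ℝ}
    (hS : S.PosDef) {M : Matrix (Fin n) (Fin d) ℝ} (h : M * S * Mᵀ = 0) : M = 0 := by
  have key : ∀ x, Mᵀ *ᵥ x = 0 := by
    intro x
    by_contra hx
    have hpos := hS.dotProduct_mulVec_pos hx
    have h0 : x ⬝ᵥ ((M * S * Mᵀ) *ᵥ x) = 0 := by simp [h]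
    rw [← mulVec_mulVec, ← mulVec_mulVec, dotProduct_mulVec, ← mulVec_transpose] at h0
    simp only [star_trivial] at hpos
    exact hpos.ne' h0
  have : Mᵀ = 0 := Matrix.ext_of_mulVec_single fun i => by rw [key, zero_mulVec]
  simpa using congrArg transpose this

theorem riccati_solution_minimizes_trace {n d : ℕ}
    (A : Matrix (Fin n) (Fin n) ℝ) (C : Matrix (Fin d) (Fin n) ℝ)
    (hC : C.rank = d)
    (Δ : Matrix (Fin n) (Fin n) ℝ) (hΔ : Δ.PosDef)
    (Sh : Matrix (Fin n) (Fin n) ℝ) (hSh : Sh.PosDef)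
    (hRic : Sh = Δ + A * Sh * Aᵀ - A * Sh * Cᵀ * (C * Sh * Cᵀ)⁻¹ * (C * Sh * Aᵀ))
    (Lstar : Matrix (Fin n) (Fin d) ℝ)
    (hLstar : Lstar = A * Sh * Cᵀ * (C * Sh * Cᵀ)⁻¹) :
    ∀ (L : Matrix (Fin n) (Fin d) ℝ) (SL : Matrix (Fin n) (Fin n) ℝ),
      SchurStable (A - L * C) → SLᵀ = SL →
      SL = Δ + (A - L * C) * SL * (A - L * C)ᵀ →
      Sh.trace ≤ SL.trace ∧ (SL.trace = Sh.trace ↔ L = Lstar) := by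
  intro L SL hF hSL hLyap
  have hShT : Shᵀ = Sh := by
    simpa [IsHermitian, conjTranspose_eq_transpose_of_trivial] using hSh.isHermitian
  have hS : (C * Sh * Cᵀ).PosDef := by
    have := hSh.mul_mul_conjTranspose_same (vecMul_injective_of_rank hC)
    rwa [conjTranspose_eq_transpose_of_trivial] at this
  have hsq := riccati_complete_square Δ hShT hS.isUnit hRic hLstar L
  have hQ : ((L - Lstar) * (C * Sh * Cᵀ) * (L - Lstar)ᵀ).PosSemidef := by
    have := hS.posSemidef.mul_mul_conjTranspose_same (L - Lstar)
    rwa [conjTranspose_eq_transpose_of_trivial] at this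
  set F := A - L * C
  set Q := (L - Lstar) * (C * Sh * Cᵀ) * (L - Lstar)ᵀ with hQdef
  have hDT : (SL - Sh)ᵀ = SL - Sh := by rw [transpose_sub, hSL, hShT]
  have hD : SL - Sh = Q + F * (SL - Sh) * Fᵀ := by
    nth_rewrite 1 [hLyap, hsq]
    noncomm_ring
  have hDpos := lyapunov_posSemidef hF hQ hDT hD
  have hFD : 0 ≤ (F * (SL - Sh) * Fᵀ).trace := by
    have := (hDpos.mul_mul_conjTranspose_same F).trace_nonneg
    rwa [conjTranspose_eq_transpose_of_trivial] at this
  have htr := congrArg trace hD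
  rw [trace_add, trace_sub] at htr
  have hQtr := hQ.trace_nonneg
  refine ⟨by linarith, fun heq => ?_, fun heq => ?_⟩
  · have hQ0 : Q = 0 := hQ.trace_eq_zero_iff.1 (by linarith)
    exact sub_eq_zero.1 (eq_zero_of_mul_posDef_mul_transpose_eq_zero hS hQ0)
  · have hQ0 : Q = 0 := by simp [hQdef, heq]
    have hneg : Sh - SL = 0 + F * (Sh - SL) * Fᵀ := by
      rw [hQ0] at hD
      rw [← neg_sub SL Sh]
      nth_rewrite 1 [hD]
      noncomm_ring
    have hDneg := (lyapunov_posSemidef hF PosSemidef.zero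
      (by rw [transpose_sub, hSL, hShT]) hneg).trace_nonneg
    rw [trace_sub] at hDneg
    linarith
end

section
/- Let A ∈ ℝ^{n×n}, C ∈ ℝ^{d×n} with C of full row rank d, and Δ ∈ ℝ^{n×n} symmetric positive definite. Suppose L0 ∈ ℝ^{n×d} is such that A − L0 C is Schur stable, and Σ0 ∈ ℝ^{n×n} is symmetric positive definite and satisfies Σ0 = Δ + (A − L0 C) Σ0 (A − L0 C)^T. Define L1 = A Σ0 C^T (C Σ0 C^T)^{-1}. Then A − L1 C is Schur stable, and any symmetric Σ1 ∈ ℝ^{n×n} satisfying Σ1 = Δ + (A − L1 C) Σ1 (A − L1 C)^T satisfies Σ0 − Σ1 positive semidefinite. -/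
/-!
Put `M = A - L1 * C`, `E = L0 - L1` and `G = C * S0 * Cᵀ`, which is positive definite because `C`
has full row rank. The gain `L1` is the one for which `M * S0 * Cᵀ = 0`, so the cross terms vanish
when `A - L0 * C = M - E * C` is expanded (`complete_square`) and
`S0 = (Δ + E * G * Eᵀ) + M * S0 * Mᵀ`.

This is a strict Lyapunov equation for `M` with positive definite solution. Evaluating it on the
real and imaginary parts of an eigenvector of `Mᵀ` shows that `M` is Schur stable
(`schurStable_of_lyapunov`). Subtracting the equation for `S1` gives
`S0 - S1 = E * G * Eᵀ + M * (S0 - S1) * Mᵀ`, and positivity follows by minimizing the quotient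
of the quadratic forms of `S0 - S1` and `S0`: if the minimum `r`, attained at `x`, were
negative, then the form of `S0 - S1` at `Mᵀ x` would be at most its value `r * S0(x)` at `x`, while
being at least `r * S0(Mᵀ x) > r * S0(x)` (`posSemidef_of_lyapunov`).
-/

open Matrix

/-- The quadratic form of a Lyapunov equation. -/
lemma lyapunov_quadForm {n : ℕ} {S Q M : Matrix (Fin n) (Fin n) ℝ}
    (h : S = Q + M * S * Mᵀ) (x : Fin n → ℝ) :
    x ⬝ᵥ (S *ᵥ x) = x ⬝ᵥ (Q *ᵥ x) + (Mᵀ *ᵥ x) ⬝ᵥ (S *ᵥ (Mᵀ *ᵥ x)) := by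
  conv_lhs => rw [h]
  rw [add_mulVec, dotProduct_add, ← mulVec_mulVec, ← mulVec_mulVec, dotProduct_mulVec x M,
    ← mulVec_transpose]

lemma quadForm_pos {n : ℕ} {S : Matrix (Fin n) (Fin n) ℝ} (hS : S.PosDef) {x : Fin n → ℝ}
    (hx : x ≠ 0) : 0 < x ⬝ᵥ (S *ᵥ x) := by
  simpa using hS.dotProduct_mulVec_pos hx

lemma quadForm_nonneg {n : ℕ} {S : Matrix (Fin n) (Fin n) ℝ} (hS : S.PosSemidef)
    (x : Fin n → ℝ) : 0 ≤ x ⬝ᵥ (S *ᵥ x) := by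
  simpa using hS.dotProduct_mulVec_nonneg x

lemma quadForm_smul {n : ℕ} (S : Matrix (Fin n) (Fin n) ℝ) (c : ℝ) (x : Fin n → ℝ) :
    (c • x) ⬝ᵥ (S *ᵥ (c • x)) = c ^ 2 * (x ⬝ᵥ (S *ᵥ x)) := by
  simp only [mulVec_smul, smul_dotProduct, dotProduct_smul, smul_eq_mul]
  ring

/-- An eigenvalue of a real matrix is an eigenvalue of its transpose; the eigenvector is split into
its real and imaginary parts. -/
lemma exists_transpose_eigenvector {n : ℕ} {M : Matrix (Fin n) (Fin n) ℝ} {μ : ℂ}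
    {v : Fin n → ℂ} (hv : v ≠ 0) (h : M.map (fun x => (x : ℂ)) *ᵥ v = μ • v) :
    ∃ x y : Fin n → ℝ, (x ≠ 0 ∨ y ≠ 0) ∧
      Mᵀ *ᵥ x = μ.re • x - μ.im • y ∧ Mᵀ *ᵥ y = μ.im • x + μ.re • y := by
  obtain ⟨w, hw0, hw⟩ : ∃ w : Fin n → ℂ, w ≠ 0 ∧
      w ᵥ* (M.map (fun x => (x : ℂ)) - μ • (1 : Matrix (Fin n) (Fin n) ℂ)) = 0 := by
    rw [exists_vecMul_eq_zero_iff, ← exists_mulVec_eq_zero_iff]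
    exact ⟨v, hv, by rw [sub_mulVec, h, smul_mulVec, one_mulVec, sub_self]⟩
  rw [vecMul_sub, vecMul_smul, vecMul_one, sub_eq_zero] at hw
  refine ⟨fun i => (w i).re, fun i => (w i).im, ?_, ?_, ?_⟩
  · by_contra! hc
    exact hw0 (funext fun i => Complex.ext (congrFun hc.1 i) (congrFun hc.2 i))
  · ext i
    have := congrArg Complex.re (congrFun hw i)
    simpa [vecMul, mulVec, dotProduct, mul_comm] using this
  · ext i
    have := congrArg Complex.im (congrFun hw i)
    simp [vecMul, mulVec, dotProduct, mul_comm] at this ⊢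
    linarith

/-- The quadratic form of a real matrix, summed over the real and imaginary parts of a complex
vector, scales by `|a + b i| ^ 2` when that vector is multiplied by `a + b i`. -/
lemma quadForm_rotate {n : ℕ} (S : Matrix (Fin n) (Fin n) ℝ) (a b : ℝ) (x y : Fin n → ℝ) :
    (a • x - b • y) ⬝ᵥ (S *ᵥ (a • x - b • y)) + (b • x + a • y) ⬝ᵥ (S *ᵥ (b • x + a • y)) =
      (a ^ 2 + b ^ 2) * (x ⬝ᵥ (S *ᵥ x) + y ⬝ᵥ (S *ᵥ y)) := by
  simp only [mulVec_smul, mulVec_add, mulVec_sub, smul_dotProduct, dotProduct_smul, smul_eq_mul,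
    add_dotProduct, sub_dotProduct, dotProduct_add, dotProduct_sub]
  ring

/-- Lyapunov's criterion for discrete-time stability. -/
lemma schurStable_of_lyapunov {n : ℕ} {S Q M : Matrix (Fin n) (Fin n) ℝ}
    (hS : S.PosDef) (hQ : Q.PosDef) (h : S = Q + M * S * Mᵀ) : SchurStable M := by
  intro μ v hv hμ
  obtain ⟨x, y, hxy, hx, hy⟩ := exists_transpose_eigenvector hv hμ
  have ex := lyapunov_quadForm h x
  have ey := lyapunov_quadForm h y
  rw [hx] at ex
  rw [hy] at ey
  have er := quadForm_rotate S μ.re μ.im x y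
  have hpos : ∀ {T : Matrix (Fin n) (Fin n) ℝ}, T.PosDef →
      0 < x ⬝ᵥ (T *ᵥ x) + y ⬝ᵥ (T *ᵥ y) := by
    intro T hT
    rcases hxy with h0 | h0
    · exact add_pos_of_pos_of_nonneg (quadForm_pos hT h0) (quadForm_nonneg hT.posSemidef y)
    · exact add_pos_of_nonneg_of_pos (quadForm_nonneg hT.posSemidef x) (quadForm_pos hT h0)
  have hSp := hpos hS
  have hQp := hpos hQ
  have hlt : μ.re ^ 2 + μ.im ^ 2 < 1 := by
    by_contra! hc
    nlinarith
  have hn : ‖μ‖ ^ 2 = μ.re ^ 2 + μ.im ^ 2 := by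
    rw [Complex.sq_norm, Complex.normSq_apply]
    ring
  nlinarith [norm_nonneg μ]

/-- A symmetric solution of a Lyapunov equation with positive semidefinite right-hand side is
positive semidefinite, provided that some positive definite `S` certifies the stability of `M`. -/
lemma posSemidef_of_lyapunov {n : ℕ} {S Q D P M : Matrix (Fin n) (Fin n) ℝ}
    (hS : S.PosDef) (hQ : Q.PosDef) (h : S = Q + M * S * Mᵀ)
    (hD : Dᵀ = D) (hP : P.PosSemidef) (hDP : D = P + M * D * Mᵀ) : D.PosSemidef := by
  refine PosSemidef.of_dotProduct_mulVec_nonneg (by simpa [IsHermitian] using hD) fun z => ?_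
  simp only [star_trivial]
  by_contra! hz
  have hz0 : z ≠ 0 := by
    rintro rfl
    simp at hz
  set f : (Fin n → ℝ) → ℝ := fun x => (x ⬝ᵥ (D *ᵥ x)) / (x ⬝ᵥ (S *ᵥ x)) with hf
  have hsph : ∀ x ∈ Metric.sphere (0 : Fin n → ℝ) 1, x ≠ 0 := by
    rintro x hx rfl
    simp at hx
  have hcont : ContinuousOn f (Metric.sphere 0 1) := by
    refine ContinuousOn.div ?_ ?_ fun x hx => (quadForm_pos hS (hsph x hx)).ne'
    · exact (Continuous.dotProduct continuous_id
        (Continuous.matrix_mulVec continuous_const continuous_id)).continuousOn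
    · exact (Continuous.dotProduct continuous_id
        (Continuous.matrix_mulVec continuous_const continuous_id)).continuousOn
  have hnormed : ∀ y : Fin n → ℝ, y ≠ 0 → ‖y‖⁻¹ • y ∈ Metric.sphere (0 : Fin n → ℝ) 1 := by
    intro y hy
    rw [mem_sphere_zero_iff_norm, norm_smul, norm_inv, norm_norm,
      inv_mul_cancel₀ (norm_ne_zero_iff.mpr hy)]
  obtain ⟨x, hx, hmin⟩ := (isCompact_sphere (0 : Fin n → ℝ) 1).exists_isMinOn
    ⟨_, hnormed z hz0⟩ hcont
  -- Both forms are homogeneous of degree two, so the minimum over the sphere is global.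
  have hglob : ∀ y : Fin n → ℝ, y ≠ 0 → f x ≤ f y := by
    intro y hy
    have h1 : f x ≤ f (‖y‖⁻¹ • y) := hmin (hnormed y hy)
    have h2 : f (‖y‖⁻¹ • y) = f y := by
      simp only [hf, quadForm_smul]
      exact mul_div_mul_left _ _ (pow_ne_zero 2 (inv_ne_zero (norm_ne_zero_iff.mpr hy)))
    rwa [h2] at h1
  have hneg : f x < 0 := (hglob z hz0).trans_lt (div_neg_of_neg_of_pos hz (quadForm_pos hS hz0))
  have hbound : ∀ y : Fin n → ℝ, f x * (y ⬝ᵥ (S *ᵥ y)) ≤ y ⬝ᵥ (D *ᵥ y) := by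
    intro y
    rcases eq_or_ne y 0 with rfl | hy
    · simp
    · exact (le_div_iff₀ (quadForm_pos hS hy)).mp (hglob y hy)
  have hx0 := hsph x hx
  have hval : x ⬝ᵥ (D *ᵥ x) = f x * (x ⬝ᵥ (S *ᵥ x)) :=
    (div_mul_cancel₀ _ (quadForm_pos hS hx0).ne').symm
  have eD := lyapunov_quadForm hDP x
  have eS := lyapunov_quadForm h x
  have hb := hbound (Mᵀ *ᵥ x)
  have hPx := quadForm_nonneg hP x
  have hQx := mul_neg_of_neg_of_pos hneg (quadForm_pos hQ hx0)
  have eS' := congrArg (f x * ·) eS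
  simp only [mul_add] at eS'
  linarith

lemma posDef_of_fullRowRank {n d : ℕ} {C : Matrix (Fin d) (Fin n) ℝ} (hC : C.rank = d)
    {S : Matrix (Fin n) (Fin n) ℝ} (hS : S.PosDef) : (C * S * Cᵀ).PosDef := by
  have hli : LinearIndependent ℝ C.row := by
    rw [linearIndependent_iff_card_eq_finrank_span, Set.finrank, ← rank_eq_finrank_span_row, hC,
      Fintype.card_fin]
  simpa using hS.mul_mul_conjTranspose_same (vecMul_injective_iff.mpr hli)

/-- Completing the square in the gain. The hypothesis on `L1` says `(A - L1 * C) * S * Cᵀ = 0`, which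
is why no cross terms appear. -/
lemma complete_square_s10 {n d : ℕ} {A S : Matrix (Fin n) (Fin n) ℝ} {C : Matrix (Fin d) (Fin n) ℝ}
    {L L1 : Matrix (Fin n) (Fin d) ℝ} (hS : Sᵀ = S)
    (hL1 : L1 * (C * S * Cᵀ) = A * S * Cᵀ) :
    (A - L * C) * S * (A - L * C)ᵀ =
      (L - L1) * (C * S * Cᵀ) * (L - L1)ᵀ + (A - L1 * C) * S * (A - L1 * C)ᵀ := by
  have h1 : (A - L1 * C) * S * Cᵀ = 0 := by
    rw [Matrix.sub_mul, Matrix.sub_mul, ← hL1]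
    simp only [Matrix.mul_assoc, sub_self]
  have h2 : C * S * (A - L1 * C)ᵀ = 0 := by
    have := congrArg transpose h1
    simpa only [transpose_mul, transpose_transpose, hS, transpose_zero, Matrix.mul_assoc] using this
  have h3 : A - L * C = (A - L1 * C) - (L - L1) * C := by
    rw [Matrix.sub_mul]
    abel
  rw [h3]
  generalize A - L1 * C = M at *
  generalize L - L1 = E at *
  have h4 : M * S * (Cᵀ * Eᵀ) = 0 := by rw [← Matrix.mul_assoc, h1, Matrix.zero_mul]
  have h5 : E * C * S * Mᵀ = 0 := by
    rw [Matrix.mul_assoc E, Matrix.mul_assoc E, h2, Matrix.mul_zero]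
  rw [transpose_sub, transpose_mul, Matrix.sub_mul, Matrix.sub_mul, Matrix.mul_sub, Matrix.mul_sub,
    h4, h5]
  simp only [Matrix.mul_assoc]
  abel

theorem observer_policy_improvement {n d : ℕ}
    (A : Matrix (Fin n) (Fin n) ℝ) (C : Matrix (Fin d) (Fin n) ℝ)
    (hC : C.rank = d)
    (Δ : Matrix (Fin n) (Fin n) ℝ) (hΔ : Δ.PosDef)
    (L0 : Matrix (Fin n) (Fin d) ℝ) (hL0 : SchurStable (A - L0 * C))
    (S0 : Matrix (Fin n) (Fin n) ℝ) (hS0 : S0.PosDef)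
    (hLyap0 : S0 = Δ + (A - L0 * C) * S0 * (A - L0 * C)ᵀ)
    (L1 : Matrix (Fin n) (Fin d) ℝ)
    (hL1 : L1 = A * S0 * Cᵀ * (C * S0 * Cᵀ)⁻¹) :
    SchurStable (A - L1 * C)
    ∧ ∀ S1 : Matrix (Fin n) (Fin n) ℝ, S1ᵀ = S1 →
        S1 = Δ + (A - L1 * C) * S1 * (A - L1 * C)ᵀ →
        (S0 - S1).PosSemidef := by
  have hG := posDef_of_fullRowRank hC hS0
  have hS0t : S0ᵀ = S0 := by simpa [IsHermitian] using hS0.isHermitian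
  have hL1G : L1 * (C * S0 * Cᵀ) = A * S0 * Cᵀ := by
    rw [hL1, Matrix.mul_assoc, nonsing_inv_mul _ ((isUnit_iff_isUnit_det _).mp hG.isUnit),
      Matrix.mul_one]
  have hP : ((L0 - L1) * (C * S0 * Cᵀ) * (L0 - L1)ᵀ).PosSemidef := by
    simpa using hG.posSemidef.mul_mul_conjTranspose_same (L0 - L1)
  rw [complete_square_s10 hS0t hL1G, ← add_assoc] at hLyap0
  have hQ := hΔ.add_posSemidef hP
  refine ⟨schurStable_of_lyapunov hS0 hQ hLyap0, fun S1 hS1 hLyap1 => ?_⟩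
  refine posSemidef_of_lyapunov hS0 hQ hLyap0 (by rw [transpose_sub, hS0t, hS1]) hP ?_
  conv_lhs => rw [hLyap0, hLyap1]
  rw [Matrix.mul_sub, Matrix.sub_mul ((A - L1 * C) * S0)]
  abel
end
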